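/- Let n ≥ 1 and suppose (A,b) satisfies Setting B with constant δ ∈ (n/(n+π²),1]. Define γ := tr A/(|A|² + |b|²), Ã := γA, b̃ := γb, and κ := (δ − n/(n+π²))·(n+π²)/π². Then for every twice continuously differentiable ℤⁿ-periodic function φ : ℝⁿ → ℝ there holds ∫_Y |Ã:D²φ + b̃·∇φ − Δφ|² ≤ (1−κ) ∫_Y (Δφ)², where D²φ is the Hessian, ∇φ the gradient and Δφ the Laplacian of φ. -/

import Mathlib

open MeasureTheory

noncomputable section

/-- The unit cell `Y = (0,1)^n`. -/
def unitCell (n : ℕ) : Set (Fin n → ℝ) := Set.univ.pi fun _ => Set.Ioo (0 : ℝ) 1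

/-- Frobenius norm squared of a matrix. -/
def frobSq {n : ℕ} (M : Matrix (Fin n) (Fin n) ℝ) : ℝ := ∑ i, ∑ j, (M i j) ^ 2

/-- Frobenius inner product of two matrices. -/
def frobInner {n : ℕ} (M N : Matrix (Fin n) (Fin n) ℝ) : ℝ := ∑ i, ∑ j, M i j * N i j

/-- Euclidean norm squared of a vector. -/
def euclSq {n : ℕ} (v : Fin n → ℝ) : ℝ := ∑ i, (v i) ^ 2

/-- Euclidean dot product. -/
def dotc {n : ℕ} (v w : Fin n → ℝ) : ℝ := ∑ i, v i * w i

/-- `ℤⁿ`-periodicity of a function on `ℝⁿ`. -/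
def IsPeriodic {n : ℕ} {α : Type*} (f : (Fin n → ℝ) → α) : Prop :=
  ∀ (x : Fin n → ℝ) (k : Fin n → ℤ), f (x + fun i => (k i : ℝ)) = f x

/-- Partial derivative in direction `i`. -/
def pd {n : ℕ} (f : (Fin n → ℝ) → ℝ) (i : Fin n) (x : Fin n → ℝ) : ℝ :=
  fderiv ℝ f x (Pi.single i 1)

/-- Gradient. -/
def grad {n : ℕ} (f : (Fin n → ℝ) → ℝ) (x : Fin n → ℝ) : Fin n → ℝ := fun i => pd f i x

/-- Hessian matrix. -/
def hess {n : ℕ} (f : (Fin n → ℝ) → ℝ) (x : Fin n → ℝ) : Matrix (Fin n) (Fin n) ℝ :=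
  Matrix.of fun i j => pd (pd f j) i x

/-- Laplacian. -/
def lap {n : ℕ} (f : (Fin n → ℝ) → ℝ) (x : Fin n → ℝ) : ℝ := ∑ i, pd (pd f i) i x

/-- Jacobian matrix of a vector field: `(jac w x) i j = ∂_j w_i (x)`. -/
def jac {n : ℕ} (w : (Fin n → ℝ) → Fin n → ℝ) (x : Fin n → ℝ) : Matrix (Fin n) (Fin n) ℝ :=
  Matrix.of fun i j => pd (fun y => w y i) j x

/-- Divergence of a vector field. -/
def divg {n : ℕ} (w : (Fin n → ℝ) → Fin n → ℝ) (x : Fin n → ℝ) : ℝ :=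
  ∑ i, pd (fun y => w y i) i x

/-- Setting B: symmetric-valued, measurable, `ℤⁿ`-periodic, essentially bounded coefficients,
uniform ellipticity, and the Cordes-type condition with constant `δ ∈ (n/(n+π²), 1]`. -/
structure SettingB {n : ℕ} (A : (Fin n → ℝ) → Matrix (Fin n) (Fin n) ℝ)
    (b : (Fin n → ℝ) → Fin n → ℝ) (lam Lam δ : ℝ) : Prop where
  symm : ∀ x, (A x).IsSymm
  measA : ∀ i j, Measurable fun x => A x i j
  measb : ∀ i, Measurable fun x => b x i
  perA : IsPeriodic A
  perb : IsPeriodic b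
  bddA : ∃ C : ℝ, ∀ᵐ x ∂(volume : Measure (Fin n → ℝ)), frobSq (A x) ≤ C
  bddb : ∃ C : ℝ, ∀ᵐ x ∂(volume : Measure (Fin n → ℝ)), euclSq (b x) ≤ C
  lam_pos : 0 < lam
  lam_le_Lam : lam ≤ Lam
  ellip : ∀ᵐ x ∂(volume : Measure (Fin n → ℝ)), ∀ ξ : Fin n → ℝ,
    lam * euclSq ξ ≤ dotc ξ (Matrix.mulVec (A x) ξ) ∧
      dotc ξ (Matrix.mulVec (A x) ξ) ≤ Lam * euclSq ξ
  delta_mem : δ ∈ Set.Ioc ((n : ℝ) / ((n : ℝ) + Real.pi ^ 2)) 1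
  cordes : ∀ᵐ x ∂(volume : Measure (Fin n → ℝ)),
    (frobSq (A x) + euclSq (b x)) / (Matrix.trace (A x)) ^ 2 ≤ 1 / ((n : ℝ) - 1 + δ)

/-- The renormalization function `γ = tr A / (|A|² + |b|²)`. -/
def gam {n : ℕ} (A : (Fin n → ℝ) → Matrix (Fin n) (Fin n) ℝ)
    (b : (Fin n → ℝ) → Fin n → ℝ) (x : Fin n → ℝ) : ℝ :=
  Matrix.trace (A x) / (frobSq (A x) + euclSq (b x))

/-- The constant `κ = (δ − n/(n+π²))·(n+π²)/π²`. -/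
def kappa (n : ℕ) (δ : ℝ) : ℝ :=
  (δ - (n : ℝ) / ((n : ℝ) + Real.pi ^ 2)) * (((n : ℝ) + Real.pi ^ 2) / Real.pi ^ 2)

/-- The invariant measure: measurable, `ℤⁿ`-periodic, square-integrable over `Y`,
with unit mass over `Y`, solving the stationary FPK equation in the very weak sense. -/
def IsInvariantMeasure {n : ℕ} (A : (Fin n → ℝ) → Matrix (Fin n) (Fin n) ℝ)
    (b : (Fin n → ℝ) → Fin n → ℝ) (r : (Fin n → ℝ) → ℝ) : Prop :=
  Measurable r ∧ IsPeriodic r ∧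
    IntegrableOn (fun x => (r x) ^ 2) (unitCell n) ∧
    (∫ x in unitCell n, r x) = 1 ∧
    ∀ φ : (Fin n → ℝ) → ℝ, ContDiff ℝ 2 φ → IsPeriodic φ →
      (∫ x in unitCell n,
        r x * (frobInner (A x) (hess φ x) + dotc (b x) (grad φ x))) = 0

/-- The bilinear form `B₂`. -/
def B2 {n : ℕ} (A : (Fin n → ℝ) → Matrix (Fin n) (Fin n) ℝ)
    (b : (Fin n → ℝ) → Fin n → ℝ) (v w : (Fin n → ℝ) → Fin n → ℝ) : ℝ :=
  (∫ x in unitCell n,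
    divg v x * (frobInner (gam A b x • A x) (jac w x) + dotc (gam A b x • b x) (w x)))
  + (1 / 2) * ∫ x in unitCell n,
      frobInner (jac v x - (jac v x).transpose) (jac w x - (jac w x).transpose)

open scoped Topology

theorem continuous_integrableOn_unitCell {n : ℕ} {F : (Fin n → ℝ) → ℝ} (hF : Continuous F) :
    IntegrableOn F (unitCell n) := by
  refine (hF.continuousOn.integrableOn_compact (K := Set.Icc 0 1) isCompact_Icc).mono_set ?_
  intro x hx
  exact ⟨fun i => (hx i trivial).1.le, fun i => (hx i trivial).2.le⟩

theorem IsPeriodic.setIntegral_unitCell_add {n : ℕ} {F : (Fin n → ℝ) → ℝ} (hF : IsPeriodic F)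
    (v : Fin n → ℝ) : ∫ x in unitCell n, F (x + v) = ∫ x in unitCell n, F x := by
  have hI : ∀ G : (Fin n → ℝ) → ℝ, ∫ x in unitCell n, G x
      = ∫ x in ZSpan.fundamentalDomain (Pi.basisFun ℝ (Fin n)), G x := by
    intro G
    have hD : ZSpan.fundamentalDomain (Pi.basisFun ℝ (Fin n))
        = Set.univ.pi fun _ => Set.Ico (0 : ℝ) 1 := by
      ext x
      simp [ZSpan.mem_fundamentalDomain]
    rw [hD]
    exact setIntegral_congr_set
      ((Measure.univ_pi_Ioo_ae_eq_Icc (μ := fun _ : Fin n => (volume : Measure ℝ))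
        (f := fun _ => 0) (g := fun _ => 1)).trans
      (Measure.univ_pi_Ico_ae_eq_Icc (μ := fun _ : Fin n => (volume : Measure ℝ))
        (f := fun _ => 0) (g := fun _ => 1)).symm)
  rw [hI, hI]
  have h := ZSpan.isAddFundamentalDomain (Pi.basisFun ℝ (Fin n)) volume
  have hv := h.vadd_of_comm v
  have hper : ∀ (g : Submodule.span ℤ (Set.range (Pi.basisFun ℝ (Fin n)))) (x : Fin n → ℝ),
      F (g +ᵥ x) = F x := by
    rintro ⟨g, hg⟩ x
    rw [Module.Basis.mem_span_iff_repr_mem] at hg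
    choose k hk using hg
    have : (⟨g, hg⟩ : Submodule.span ℤ (Set.range (Pi.basisFun ℝ (Fin n)))) +ᵥ x
        = x + fun i => (k i : ℝ) := by
      ext i
      have := hk i
      simp at this
      simp [Submodule.vadd_def, this, add_comm]
    rw [this, hF]
  have : VAddInvariantMeasure (Submodule.span ℤ (Set.range (Pi.basisFun ℝ (Fin n))))
      (Fin n → ℝ) volume := ⟨fun c s _ => measure_preimage_add volume (c : Fin n → ℝ) s⟩
  rw [← hv.setIntegral_eq h hper]
  have := (measurePreserving_add_right (volume : Measure (Fin n → ℝ)) v).setIntegral_image_emb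
    (measurableEmbedding_addRight v) F (ZSpan.fundamentalDomain (Pi.basisFun ℝ (Fin n)))
  rw [← this]
  congr 2
  exact Set.image_congr fun x _ => add_comm x v

/-- The difference quotient of `v` at `x` in direction `a` with step `h`. -/
def dquot {n : ℕ} (v : (Fin n → ℝ) → ℝ) (a : Fin n → ℝ) (h : ℝ) (x : Fin n → ℝ) : ℝ :=
  h⁻¹ * (v (x + h • a) - v x)

theorem IsPeriodic.mul {n : ℕ} {u v : (Fin n → ℝ) → ℝ} (hu : IsPeriodic u) (hv : IsPeriodic v) :
    IsPeriodic fun x => u x * v x := fun x k => by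
  change u _ * v _ = u x * v x
  rw [hu x k, hv x k]

theorem IsPeriodic.comp_add {n : ℕ} {u : (Fin n → ℝ) → ℝ} (hu : IsPeriodic u) (a : Fin n → ℝ) :
    IsPeriodic fun x => u (x + a) := fun x k => by
  change u _ = u _
  rw [add_right_comm, hu]

theorem integral_dquot_mul_dquot {n : ℕ} {u v : (Fin n → ℝ) → ℝ} (hu : IsPeriodic u)
    (hv : IsPeriodic v) (hcu : Continuous u) (hcv : Continuous v) (a c : Fin n → ℝ) (h : ℝ) :
    ∫ x in unitCell n, dquot v a h x * dquot u c h x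
      = ∫ x in unitCell n, dquot v c (-h) x * dquot u a (-h) x := by
  have key : ∀ (p q : Fin n → ℝ) (t : ℝ), ∫ x in unitCell n, dquot v p t x * dquot u q t x
      = t⁻¹ ^ 2 * ((∫ x in unitCell n, v (x + t • p) * u (x + t • q))
        - (∫ x in unitCell n, v (x + t • p) * u x)
        - (∫ x in unitCell n, v x * u (x + t • q)) + ∫ x in unitCell n, v x * u x) := by
    intro p q t
    have i1 := continuous_integrableOn_unitCell
      (F := fun x => v (x + t • p) * u (x + t • q)) (by fun_prop)
    have i2 := continuous_integrableOn_unitCell (F := fun x => v (x + t • p) * u x) (by fun_prop)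
    have i3 := continuous_integrableOn_unitCell (F := fun x => v x * u (x + t • q)) (by fun_prop)
    have i4 := continuous_integrableOn_unitCell (F := fun x => v x * u x) (by fun_prop)
    have i12 := continuous_integrableOn_unitCell
      (F := fun x => v (x + t • p) * u (x + t • q) - v (x + t • p) * u x) (by fun_prop)
    have i123 := continuous_integrableOn_unitCell
      (F := fun x => v (x + t • p) * u (x + t • q) - v (x + t • p) * u x - v x * u (x + t • q))
      (by fun_prop)
    rw [← integral_sub i1 i2, ← integral_sub i12 i3, ← integral_add i123 i4,
      ← integral_const_mul]
    refine integral_congr_ae (.of_forall fun x => ?_)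
    simp only [dquot]
    ring
  rw [key, key]
  have e1 := ((hv.comp_add (-h • c)).mul (hu.comp_add (-h • a))).setIntegral_unitCell_add
    (h • a + h • c)
  have e2 := ((hv.comp_add (-h • c)).mul hu).setIntegral_unitCell_add (h • c)
  have e3 := (hv.mul (hu.comp_add (-h • a))).setIntegral_unitCell_add (h • a)
  rw [← e1, ← e2, ← e3]
  have s1 : ∀ x : Fin n → ℝ, x + (h • a + h • c) + -h • c = x + h • a := fun x => by module
  have s2 : ∀ x : Fin n → ℝ, x + (h • a + h • c) + -h • a = x + h • c := fun x => by module
  have s3 : ∀ (x y : Fin n → ℝ), x + h • y + -h • y = x := fun x y => by module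
  simp only [s1, s2, s3]
  rw [inv_neg, neg_sq]
  ring

theorem exists_norm_dquot_le {n : ℕ} {v : (Fin n → ℝ) → ℝ} (hv : ContDiff ℝ 1 v)
    (a : Fin n → ℝ) :
    ∃ C : ℝ, ∀ h : ℝ, |h| ≤ 1 → ∀ x ∈ unitCell n, ‖dquot v a h x‖ ≤ C := by
  obtain ⟨C, hC⟩ := (isCompact_closedBall (0 : Fin n → ℝ) (1 + ‖a‖)).exists_bound_of_continuousOn
    (hv.continuous_fderiv one_ne_zero).continuousOn
  refine ⟨C * ‖a‖, fun h hh x hx => ?_⟩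
  have hx1 : ‖x‖ ≤ 1 := by
    refine (pi_norm_le_iff_of_nonneg zero_le_one).2 fun i => ?_
    have := hx i trivial
    rw [Real.norm_eq_abs, abs_of_pos this.1]
    exact this.2.le
  have hha : ‖h • a‖ ≤ ‖a‖ := by
    rw [norm_smul, Real.norm_eq_abs]
    exact mul_le_of_le_one_left (norm_nonneg a) hh
  have hC0 : 0 ≤ C := (norm_nonneg _).trans (hC 0 (by simp; positivity))
  have hb := (convex_closedBall (0 : Fin n → ℝ) (1 + ‖a‖)).norm_image_sub_le_of_norm_fderiv_le
    (fun y _ => hv.differentiable one_ne_zero y) hC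
    (x := x) (y := x + h • a) (by simp; linarith [norm_nonneg a])
    (by simp only [mem_closedBall_zero_iff]; linarith [norm_add_le x (h • a)])
  rw [add_sub_cancel_left, norm_smul] at hb
  rw [dquot, norm_mul, norm_inv]
  rcases eq_or_ne h 0 with rfl | h0
  · simpa using mul_nonneg hC0 (norm_nonneg a)
  · rw [inv_mul_le_iff₀ (norm_pos_iff.2 h0)]
    linarith

theorem tendsto_dquot {n : ℕ} {v : (Fin n → ℝ) → ℝ} {x : Fin n → ℝ} (hv : DifferentiableAt ℝ v x)
    (a : Fin n → ℝ) :
    Filter.Tendsto (fun h => dquot v a h x) (𝓝[≠] 0) (𝓝 (fderiv ℝ v x a)) := by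
  simpa [dquot] using (hv.hasFDerivAt.hasLineDerivAt a).tendsto_slope_zero

theorem tendsto_integral_dquot_mul_dquot {n : ℕ} {u v : (Fin n → ℝ) → ℝ} (hu : ContDiff ℝ 1 u)
    (hv : ContDiff ℝ 1 v) (a c : Fin n → ℝ) :
    Filter.Tendsto (fun h => ∫ x in unitCell n, dquot v a h x * dquot u c h x) (𝓝[≠] 0)
      (𝓝 (∫ x in unitCell n, fderiv ℝ v x a * fderiv ℝ u x c)) := by
  obtain ⟨C, hC⟩ := exists_norm_dquot_le hv a
  obtain ⟨D, hD⟩ := exists_norm_dquot_le hu c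
  have hcu := hu.continuous
  have hcv := hv.continuous
  have hm : MeasurableSet (unitCell n) := MeasurableSet.univ_pi fun _ => measurableSet_Ioo
  refine tendsto_integral_filter_of_dominated_convergence (fun _ => C * D) ?_ ?_
    (continuous_integrableOn_unitCell continuous_const) ?_
  · refine .of_forall fun h => Continuous.aestronglyMeasurable ?_
    unfold dquot
    fun_prop
  · have : ∀ᶠ h : ℝ in 𝓝[≠] 0, |h| ≤ 1 := by
      refine nhdsWithin_le_nhds ?_
      filter_upwards [Metric.closedBall_mem_nhds (0 : ℝ) one_pos] with h hh
      simpa using hh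
    filter_upwards [this] with h hh
    refine (ae_restrict_iff' hm).2 (.of_forall fun x hx => ?_)
    rw [norm_mul]
    exact mul_le_mul (hC h hh x hx) (hD h hh x hx) (norm_nonneg _)
      ((norm_nonneg _).trans (hC h hh x hx))
  · exact .of_forall fun x => (tendsto_dquot (hv.differentiable one_ne_zero x) a).mul
      (tendsto_dquot (hu.differentiable one_ne_zero x) c)

theorem integral_fderiv_mul_fderiv_comm {n : ℕ} {u v : (Fin n → ℝ) → ℝ} (hu : ContDiff ℝ 1 u)
    (hv : ContDiff ℝ 1 v) (hpu : IsPeriodic u) (hpv : IsPeriodic v) (a c : Fin n → ℝ) :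
    ∫ x in unitCell n, fderiv ℝ v x a * fderiv ℝ u x c
      = ∫ x in unitCell n, fderiv ℝ v x c * fderiv ℝ u x a := by
  have hneg : Filter.Tendsto (fun h : ℝ => -h) (𝓝[≠] 0) (𝓝[≠] 0) := by
    refine tendsto_nhdsWithin_iff.2 ⟨?_, ?_⟩
    · simpa using (continuous_neg.tendsto (0 : ℝ)).mono_left nhdsWithin_le_nhds
    · filter_upwards [self_mem_nhdsWithin] with h hh
      simpa using hh
  have h1 := tendsto_integral_dquot_mul_dquot hu hv a c
  have h2 := (tendsto_integral_dquot_mul_dquot hu hv c a).comp hneg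
  refine tendsto_nhds_unique h1 (h2.congr fun h => ?_)
  exact (integral_dquot_mul_dquot hpu hpv hu.continuous hv.continuous a c h).symm

theorem twelve_mul_sq_le_integral_deriv_sq {f f' : ℝ → ℝ} (hf : ∀ s, HasDerivAt f (f' s) s)
    (hf' : Continuous f') (h01 : f 1 = f 0) (hmean : ∫ s in (0 : ℝ)..1, f s = 0) :
    12 * f 0 ^ 2 ≤ ∫ s in (0 : ℝ)..1, f' s ^ 2 := by
  have hrep : ∫ s in (0 : ℝ)..1, (s - 1 / 2) * f' s = f 0 := by
    rw [intervalIntegral.integral_mul_deriv_eq_deriv_mul (u := fun s => s - 1 / 2)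
      (u' := fun _ => 1) (fun s _ => (hasDerivAt_id s).sub_const _) (fun s _ => hf s)
      (continuous_const.intervalIntegrable _ _) (hf'.intervalIntegrable _ _)]
    simp only [one_mul, hmean, h01]
    ring
  have hsq : ∫ s in (0 : ℝ)..1, (s - 1 / 2) ^ 2 = 1 / 12 := by
    rw [intervalIntegral.integral_comp_sub_right (fun s => s ^ 2), integral_pow]
    norm_num
  have hnn : 0 ≤ ∫ s in (0 : ℝ)..1, (f' s - 12 * f 0 * (s - 1 / 2)) ^ 2 :=
    intervalIntegral.integral_nonneg zero_le_one fun s _ => sq_nonneg _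
  have hexp : ∫ s in (0 : ℝ)..1, (f' s - 12 * f 0 * (s - 1 / 2)) ^ 2
      = (∫ s in (0 : ℝ)..1, f' s ^ 2) - 24 * f 0 * (∫ s in (0 : ℝ)..1, (s - 1 / 2) * f' s)
        + 144 * f 0 ^ 2 * ∫ s in (0 : ℝ)..1, (s - 1 / 2) ^ 2 := by
    rw [← intervalIntegral.integral_const_mul, ← intervalIntegral.integral_const_mul,
      ← intervalIntegral.integral_sub, ← intervalIntegral.integral_add]
    · congr 1
      ext s
      ring
    all_goals exact Continuous.intervalIntegrable (by fun_prop) _ _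
  rw [hexp, hrep, hsq] at hnn
  linarith

theorem IsPeriodic.add_single {n : ℕ} {F : (Fin n → ℝ) → ℝ} (hF : IsPeriodic F) (x : Fin n → ℝ)
    (i : Fin n) : F (x + Pi.single i 1) = F x := by
  rw [← hF x (Pi.single i 1)]
  congr 2
  ext j
  rcases eq_or_ne j i with rfl | h
  · simp
  · simp [h]

theorem IsPeriodic.pd {n : ℕ} {F : (Fin n → ℝ) → ℝ} (hF : IsPeriodic F) (i : Fin n) :
    IsPeriodic (pd F i) := fun x k => by
  have : (fun y => F (y + fun j => (k j : ℝ))) = F := funext fun y => hF y k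
  unfold _root_.pd
  rw [← fderiv_comp_add_right, this]

theorem contDiff_one_pd {n : ℕ} {F : (Fin n → ℝ) → ℝ} (hF : ContDiff ℝ 2 F) (i : Fin n) :
    ContDiff ℝ 1 (pd F i) :=
  (hF.fderiv_right (m := 1) (by norm_num)).clm_apply contDiff_const

theorem continuous_pd {n : ℕ} {F : (Fin n → ℝ) → ℝ} (hF : ContDiff ℝ 1 F) (i : Fin n) :
    Continuous (pd F i) :=
  (hF.continuous_fderiv one_ne_zero).clm_apply continuous_const

theorem hasDerivAt_comp_add_smul_single {n : ℕ} {F : (Fin n → ℝ) → ℝ} (hF : Differentiable ℝ F)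
    (x : Fin n → ℝ) (i : Fin n) (s : ℝ) :
    HasDerivAt (fun s : ℝ => F (x + s • Pi.single i 1)) (pd F i (x + s • Pi.single i 1)) s := by
  have hl : HasDerivAt (fun s : ℝ => x + s • (Pi.single i 1 : Fin n → ℝ)) (Pi.single i 1) s := by
    simpa using ((hasDerivAt_id s).smul_const (Pi.single i 1 : Fin n → ℝ)).const_add x
  exact (hF _).hasFDerivAt.comp_hasDerivAt s hl

theorem twelve_mul_integral_pd_sq_le {n : ℕ} {φ : (Fin n → ℝ) → ℝ} (hφ : ContDiff ℝ 2 φ)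
    (hp : IsPeriodic φ) (i : Fin n) :
    12 * ∫ x in unitCell n, pd φ i x ^ 2 ≤ ∫ x in unitCell n, pd (pd φ i) i x ^ 2 := by
  have hg := contDiff_one_pd hφ i
  have hgc := hg.continuous
  have hgg : Continuous (pd (pd φ i) i) := continuous_pd hg i
  have hpt : ∀ x, 12 * pd φ i x ^ 2
      ≤ ∫ s in (0 : ℝ)..1, pd (pd φ i) i (x + s • Pi.single i 1) ^ 2 := by
    intro x
    have h := twelve_mul_sq_le_integral_deriv_sq
      (hasDerivAt_comp_add_smul_single (hg.differentiable one_ne_zero) x i) (by fun_prop)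
      (by simpa using (hp.pd i).add_single x i)
      (by
        rw [intervalIntegral.integral_eq_sub_of_hasDerivAt
          (fun s _ => hasDerivAt_comp_add_smul_single (hφ.differentiable two_ne_zero) x i s)
          (Continuous.intervalIntegrable (by fun_prop) _ _)]
        simp [hp.add_single])
    simpa using h
  have hint : Integrable (Function.uncurry fun (s : ℝ) (x : Fin n → ℝ) =>
      pd (pd φ i) i (x + s • Pi.single i 1) ^ 2)
      ((volume.restrict (Set.uIoc 0 1)).prod (volume.restrict (unitCell n))) := by
    rw [Measure.prod_restrict]
    refine (ContinuousOn.integrableOn_compact (K := Set.Icc (0 : ℝ) 1 ×ˢ Set.Icc 0 1)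
      (isCompact_Icc.prod isCompact_Icc) (Continuous.continuousOn ?_)).mono_set ?_
    · unfold Function.uncurry
      fun_prop
    · refine Set.prod_mono ?_ fun x hx =>
        ⟨fun i => (hx i trivial).1.le, fun i => (hx i trivial).2.le⟩
      rw [Set.uIoc_of_le zero_le_one]
      exact Set.Ioc_subset_Icc_self
  have hsq : IsPeriodic fun x => pd (pd φ i) i x ^ 2 := by
    simpa only [sq] using ((hp.pd i).pd i).mul ((hp.pd i).pd i)
  calc 12 * ∫ x in unitCell n, pd φ i x ^ 2
      = ∫ x in unitCell n, 12 * pd φ i x ^ 2 := (integral_const_mul _ _).symm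
    _ ≤ ∫ x in unitCell n, ∫ s in (0 : ℝ)..1, pd (pd φ i) i (x + s • Pi.single i 1) ^ 2 := by
        refine integral_mono (continuous_integrableOn_unitCell (by fun_prop))
          (continuous_integrableOn_unitCell ?_) hpt
        exact intervalIntegral.continuous_parametric_intervalIntegral_of_continuous' (by fun_prop) _ _
    _ = ∫ s in (0 : ℝ)..1, ∫ x in unitCell n, pd (pd φ i) i (x + s • Pi.single i 1) ^ 2 :=
        (intervalIntegral_integral_swap hint).symm
    _ = ∫ x in unitCell n, pd (pd φ i) i x ^ 2 := by
        simp [hsq.setIntegral_unitCell_add]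

theorem pd_pd_comm {n : ℕ} {φ : (Fin n → ℝ) → ℝ} (hφ : ContDiff ℝ 2 φ) (i j : Fin n)
    (x : Fin n → ℝ) : pd (pd φ i) j x = pd (pd φ j) i x := by
  have hd : DifferentiableAt ℝ (fderiv ℝ φ) x :=
    (hφ.fderiv_right (m := 1) (by norm_num)).differentiable one_ne_zero x
  have key : ∀ k l : Fin n, pd (pd φ k) l x
      = fderiv ℝ (fderiv ℝ φ) x (Pi.single l 1) (Pi.single k 1) := by
    intro k l
    unfold pd
    rw [fderiv_clm_apply hd (differentiableAt_const _)]
    simp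
  rw [key, key]
  exact hφ.contDiffAt.isSymmSndFDerivAt (by simp) _ _

theorem integral_frobSq_hess {n : ℕ} {φ : (Fin n → ℝ) → ℝ} (hφ : ContDiff ℝ 2 φ)
    (hp : IsPeriodic φ) :
    ∫ x in unitCell n, frobSq (hess φ x) = ∫ x in unitCell n, lap φ x ^ 2 := by
  have hc : ∀ i j, Continuous (pd (pd φ i) j) := fun i j => continuous_pd (contDiff_one_pd hφ i) j
  have h1 : ∀ x, lap φ x ^ 2 = ∑ i, ∑ j, pd (pd φ i) i x * pd (pd φ j) j x := fun x => by
    rw [sq, lap, Finset.sum_mul_sum]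
  simp only [h1, frobSq, hess, Matrix.of_apply]
  rw [integral_finsetSum _ fun i _ => continuous_integrableOn_unitCell (by fun_prop),
    integral_finsetSum _ fun i _ => continuous_integrableOn_unitCell (by fun_prop)]
  refine Finset.sum_congr rfl fun i _ => ?_
  rw [integral_finsetSum _ fun j _ => continuous_integrableOn_unitCell (by fun_prop),
    integral_finsetSum _ fun j _ => continuous_integrableOn_unitCell (by fun_prop)]
  refine Finset.sum_congr rfl fun j _ => ?_
  refine Eq.trans ?_ (integral_fderiv_mul_fderiv_comm (contDiff_one_pd hφ j) (contDiff_one_pd hφ i)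
    (hp.pd j) (hp.pd i) (Pi.single j 1) (Pi.single i 1))
  refine integral_congr_ae (.of_forall fun x => ?_)
  change pd (pd φ j) i x ^ 2 = pd (pd φ i) j x * pd (pd φ j) i x
  rw [pd_pd_comm hφ i j, sq]

theorem twelve_mul_integral_euclSq_grad_le {n : ℕ} {φ : (Fin n → ℝ) → ℝ} (hφ : ContDiff ℝ 2 φ)
    (hp : IsPeriodic φ) :
    12 * ∫ x in unitCell n, euclSq (grad φ x) ≤ ∫ x in unitCell n, frobSq (hess φ x) := by
  have hc1 : ∀ i, Continuous (pd φ i) := fun i => (contDiff_one_pd hφ i).continuous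
  have hc : ∀ i j, Continuous (pd (pd φ i) j) := fun i j => continuous_pd (contDiff_one_pd hφ i) j
  simp only [euclSq, grad]
  rw [integral_finsetSum _ fun i _ => continuous_integrableOn_unitCell (by fun_prop),
    Finset.mul_sum]
  refine (Finset.sum_le_sum fun i _ => twelve_mul_integral_pd_sq_le hφ hp i).trans ?_
  rw [← integral_finsetSum _ fun i _ => continuous_integrableOn_unitCell (by fun_prop)]
  simp only [frobSq, hess, Matrix.of_apply]
  refine integral_mono (continuous_integrableOn_unitCell (by fun_prop))
    (continuous_integrableOn_unitCell (by fun_prop)) fun x => Finset.sum_le_sum fun i _ => ?_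
  exact Finset.single_le_sum (f := fun j => pd (pd φ j) i x ^ 2) (fun j _ => sq_nonneg _)
    (Finset.mem_univ i)

theorem sq_frobInner_add_dotc_le {n : ℕ} (M N : Matrix (Fin n) (Fin n) ℝ) (v w : Fin n → ℝ) :
    (frobInner M N + dotc v w) ^ 2 ≤ (frobSq M + euclSq v) * (frobSq N + euclSq w) := by
  have h := Finset.sum_mul_sq_le_sq_mul_sq Finset.univ
    (Sum.elim (fun p : Fin n × Fin n => M p.1 p.2) v) (Sum.elim (fun p => N p.1 p.2) w)
  simpa [Fintype.sum_sum_type, Fintype.sum_prod_type, frobInner, frobSq, dotc, euclSq] using h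

theorem frobSq_smul_sub_one_add {n : ℕ} (g : ℝ) (M : Matrix (Fin n) (Fin n) ℝ) (v : Fin n → ℝ) :
    frobSq (g • M - 1) + euclSq (g • v)
      = g ^ 2 * (frobSq M + euclSq v) - 2 * g * M.trace + n := by
  have h : ∀ i j, (g * M i j - (1 : Matrix (Fin n) (Fin n) ℝ) i j) ^ 2
      = g ^ 2 * M i j ^ 2 - 2 * g * (if i = j then M i j else 0) + if i = j then 1 else 0 := by
    intro i j
    rw [Matrix.one_apply]
    split_ifs <;> ring
  simp only [frobSq, euclSq, Matrix.sub_apply, Matrix.smul_apply, Pi.smul_apply, smul_eq_mul, h,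
    Finset.sum_add_distrib, Finset.sum_sub_distrib, ← Finset.mul_sum, mul_pow, Matrix.trace,
    Matrix.diag_apply]
  simp
  ring

theorem frobSq_nonneg {n : ℕ} (M : Matrix (Fin n) (Fin n) ℝ) : 0 ≤ frobSq M :=
  Finset.sum_nonneg fun _ _ => Finset.sum_nonneg fun _ _ => sq_nonneg _

theorem euclSq_nonneg {n : ℕ} (v : Fin n → ℝ) : 0 ≤ euclSq v :=
  Finset.sum_nonneg fun _ _ => sq_nonneg _

theorem le_diag_of_forall_le_dotc {n : ℕ} {M : Matrix (Fin n) (Fin n) ℝ} {lam : ℝ}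
    (h : ∀ ξ : Fin n → ℝ, lam * euclSq ξ ≤ dotc ξ (M.mulVec ξ)) (i : Fin n) : lam ≤ M i i := by
  simpa [euclSq, dotc, Pi.single_apply] using h (Pi.single i 1)

theorem SettingB.frobSq_add_euclSq_le {n : ℕ} (hn : 1 ≤ n)
    {A : (Fin n → ℝ) → Matrix (Fin n) (Fin n) ℝ} {b : (Fin n → ℝ) → Fin n → ℝ} {lam Lam δ : ℝ}
    (hAB : SettingB A b lam Lam δ) :
    ∀ᵐ x : Fin n → ℝ, frobSq (gam A b x • A x - 1) + euclSq (gam A b x • b x) ≤ 1 - δ := by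
  filter_upwards [hAB.ellip, hAB.cordes] with x hell hcor
  have hdiag := le_diag_of_forall_le_dotc fun ξ => (hell ξ).1
  have htr : 0 < (A x).trace := by
    have : Nonempty (Fin n) := ⟨⟨0, hn⟩⟩
    exact Finset.sum_pos (fun i _ => hAB.lam_pos.trans_le (hdiag i)) Finset.univ_nonempty
  have hS : 0 < frobSq (A x) + euclSq (b x) := by
    refine add_pos_of_pos_of_nonneg ?_ (euclSq_nonneg _)
    have h0 := hAB.lam_pos.trans_le (hdiag ⟨0, hn⟩)
    refine (pow_pos h0 2).trans_le ?_
    refine (Finset.single_le_sum (f := fun j => A x ⟨0, hn⟩ j ^ 2) (fun _ _ => sq_nonneg _)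
      (Finset.mem_univ _)).trans ?_
    exact Finset.single_le_sum (f := fun i => ∑ j, A x i j ^ 2)
      (fun _ _ => Finset.sum_nonneg fun _ _ => sq_nonneg _) (Finset.mem_univ _)
  have hδ : 0 < δ := lt_of_le_of_lt (by positivity) hAB.delta_mem.1
  have hn' : (1 : ℝ) ≤ n := by exact_mod_cast hn
  have hd : 0 < (n : ℝ) - 1 + δ := by linarith
  rw [div_le_div_iff₀ (by positivity) hd, one_mul] at hcor
  rw [frobSq_smul_sub_one_add]
  have hg : gam A b x ^ 2 * (frobSq (A x) + euclSq (b x)) - 2 * gam A b x * (A x).trace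
      = -((A x).trace ^ 2 / (frobSq (A x) + euclSq (b x))) := by
    rw [gam]
    field_simp
    ring
  have : (n : ℝ) - 1 + δ ≤ (A x).trace ^ 2 / (frobSq (A x) + euclSq (b x)) := by
    rw [le_div_iff₀ hS]
    linarith
  rw [hg]
  linarith

theorem frobInner_sub_lap {n : ℕ} (M : Matrix (Fin n) (Fin n) ℝ) (φ : (Fin n → ℝ) → ℝ)
    (x : Fin n → ℝ) : frobInner M (hess φ x) - lap φ x = frobInner (M - 1) (hess φ x) := by
  simp [frobInner, lap, hess, sub_mul, Finset.sum_sub_distrib, Matrix.one_apply]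

theorem one_sub_kappa (n : ℕ) (δ : ℝ) : 1 - kappa n δ = (1 - δ) * (1 + n / Real.pi ^ 2) := by
  have := Real.pi_pos
  have : (n : ℝ) + Real.pi ^ 2 ≠ 0 := by positivity
  rw [kappa]
  field_simp
  ring

/-- In Setting B, for every `C²` periodic function `φ` there holds
`∫_Y |Ã:D²φ + b̃·∇φ − Δφ|² ≤ (1−κ) ∫_Y (Δφ)²`. -/
theorem stmt_6 {n : ℕ} (hn : 1 ≤ n)
    (A : (Fin n → ℝ) → Matrix (Fin n) (Fin n) ℝ) (b : (Fin n → ℝ) → Fin n → ℝ)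
    (lam Lam δ : ℝ) (hAB : SettingB A b lam Lam δ) :
    ∀ φ : (Fin n → ℝ) → ℝ, ContDiff ℝ 2 φ → IsPeriodic φ →
      (∫ x in unitCell n,
        (frobInner (gam A b x • A x) (hess φ x) + dotc (gam A b x • b x) (grad φ x)
          - lap φ x) ^ 2)
        ≤ (1 - kappa n δ) * ∫ x in unitCell n, (lap φ x) ^ 2 := by
  intro φ hφ hp
  have hc1 : ∀ i, Continuous (pd φ i) := fun i => (contDiff_one_pd hφ i).continuous
  have hc : ∀ i j, Continuous (pd (pd φ i) j) := fun i j => continuous_pd (contDiff_one_pd hφ i) j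
  have hcH : Continuous fun x => frobSq (hess φ x) := by
    simp only [frobSq, hess, Matrix.of_apply]
    fun_prop
  have hcG : Continuous fun x => euclSq (grad φ x) := by
    simp only [euclSq, grad]
    fun_prop
  have hδ : 0 ≤ 1 - δ := sub_nonneg.2 hAB.delta_mem.2
  have hL : 0 ≤ ∫ x in unitCell n, lap φ x ^ 2 := integral_nonneg fun x => sq_nonneg _
  have hn' : (1 : ℝ) ≤ n := by exact_mod_cast hn
  have hpi : 1 / 12 ≤ (n : ℝ) / Real.pi ^ 2 := by
    rw [div_le_div_iff₀ (by norm_num) (by positivity)]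
    nlinarith [Real.pi_lt_d2, Real.pi_pos]
  have hgrad := twelve_mul_integral_euclSq_grad_le hφ hp
  rw [integral_frobSq_hess hφ hp] at hgrad
  calc _ ≤ ∫ x in unitCell n, (1 - δ) * (frobSq (hess φ x) + euclSq (grad φ x)) := by
        refine integral_mono_of_nonneg (.of_forall fun x => sq_nonneg _)
          (continuous_integrableOn_unitCell (by fun_prop)) ?_
        filter_upwards [ae_restrict_of_ae (hAB.frobSq_add_euclSq_le hn)] with x hx
        rw [add_sub_right_comm, frobInner_sub_lap]
        exact (sq_frobInner_add_dotc_le _ _ _ _).trans (mul_le_mul_of_nonneg_right hx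
          (add_nonneg (frobSq_nonneg _) (euclSq_nonneg _)))
    _ = (1 - δ) * ((∫ x in unitCell n, lap φ x ^ 2) + ∫ x in unitCell n, euclSq (grad φ x)) := by
        rw [integral_const_mul, integral_add (continuous_integrableOn_unitCell hcH)
          (continuous_integrableOn_unitCell hcG), integral_frobSq_hess hφ hp]
    _ ≤ (1 - δ) * ((1 + n / Real.pi ^ 2) * ∫ x in unitCell n, lap φ x ^ 2) := by
        refine mul_le_mul_of_nonneg_left ?_ hδ
        nlinarith [mul_le_mul_of_nonneg_right hpi hL]
    _ = _ := by rw [one_sub_kappa, mul_assoc]
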